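/- If θ is an angle function for α, then for all (s, v): φ_s(s,v) = −v·f(s)·N(s) − cos θ(s)·C(s) + (sin θ(s) + v·g(s))·W(s) and φ_v(s,v) = C(s); hence the first fundamental form coefficients are E = ‖φ_s‖² = v²f(s)² + cos²θ(s) + (sin θ(s) + v·g(s))², F = ⟨φ_s, φ_v⟩ = −cos θ(s), G = ‖φ_v‖² = 1, and EG − F² = v²f(s)² + (sin θ(s) + v·g(s))². -/

import Mathlib

open RealInnerProductSpace

/-- Cross product on `EuclideanSpace ℝ (Fin 3)`. -/
noncomputable def cross3 (u v : EuclideanSpace ℝ (Fin 3)) : EuclideanSpace ℝ (Fin 3) :=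
  (EuclideanSpace.equiv (Fin 3) ℝ).symm
    (crossProduct ((EuclideanSpace.equiv (Fin 3) ℝ) u) ((EuclideanSpace.equiv (Fin 3) ℝ) v))

/-- Determinant of the 3×3 matrix whose rows are the given vectors. -/
noncomputable def det3 (u v w : EuclideanSpace ℝ (Fin 3)) : ℝ :=
  Matrix.det (Matrix.of ![(EuclideanSpace.equiv (Fin 3) ℝ) u,
    (EuclideanSpace.equiv (Fin 3) ℝ) v, (EuclideanSpace.equiv (Fin 3) ℝ) w])

theorem inner_eq_sum_three (u v : EuclideanSpace ℝ (Fin 3)) :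
    ⟪u, v⟫ = u 0 * v 0 + u 1 * v 1 + u 2 * v 2 := by
  simp only [PiLp.inner_apply, Fin.sum_univ_three, RCLike.inner_apply, conj_trivial]
  ring

theorem cross3_zero (u v : EuclideanSpace ℝ (Fin 3)) : cross3 u v 0 = u 1 * v 2 - u 2 * v 1 := by
  simp [cross3, cross_apply]

theorem cross3_one (u v : EuclideanSpace ℝ (Fin 3)) : cross3 u v 1 = u 2 * v 0 - u 0 * v 2 := by
  simp [cross3, cross_apply]

theorem cross3_two (u v : EuclideanSpace ℝ (Fin 3)) : cross3 u v 2 = u 0 * v 1 - u 1 * v 0 := by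
  simp [cross3, cross_apply]

theorem cross3_smul_self (c : ℝ) (u : EuclideanSpace ℝ (Fin 3)) : cross3 (c • u) u = 0 := by
  ext i
  fin_cases i <;> simp [cross3_zero, cross3_one, cross3_two] <;> ring

theorem inner_cross3_left (u v : EuclideanSpace ℝ (Fin 3)) : ⟪u, cross3 u v⟫ = 0 := by
  rw [inner_eq_sum_three, cross3_zero, cross3_one, cross3_two]
  ring

theorem inner_cross3_right (u v : EuclideanSpace ℝ (Fin 3)) : ⟪v, cross3 u v⟫ = 0 := by
  rw [inner_eq_sum_three, cross3_zero, cross3_one, cross3_two]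
  ring

theorem inner_cross3_self (u v : EuclideanSpace ℝ (Fin 3)) :
    ⟪cross3 u v, cross3 u v⟫ = ⟪u, u⟫ * ⟪v, v⟫ - ⟪u, v⟫ ^ 2 := by
  simp only [inner_eq_sum_three, cross3_zero, cross3_one, cross3_two]
  ring

/-- If `n` is a unit vector orthogonal to `t` and `x`, then `t × x` is a multiple of `n`. -/
theorem cross3_eq_smul_of_orthogonal {t n x : EuclideanSpace ℝ (Fin 3)}
    (hn : ⟪n, n⟫ = 1) (ht : ⟪t, n⟫ = 0)
    (hx : ⟪n, x⟫ = 0) : cross3 t x = (-⟪x, cross3 t n⟫) • n := by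
  rw [inner_eq_sum_three] at hn ht hx
  ext i
  fin_cases i <;>
    simp only [Fin.zero_eta, Fin.mk_one, Fin.reduceFinMk, PiLp.smul_apply, smul_eq_mul,
      inner_eq_sum_three, cross3_zero, cross3_one, cross3_two]
  · linear_combination (-(t 1 * x 2 - t 2 * x 1)) * hn - (n 1 * t 2 - n 2 * t 1) * hx
      + (n 1 * x 2 - n 2 * x 1) * ht
  · linear_combination (-(t 2 * x 0 - t 0 * x 2)) * hn - (n 2 * t 0 - n 0 * t 2) * hx
      + (n 2 * x 0 - n 0 * x 2) * ht
  · linear_combination (-(t 0 * x 1 - t 1 * x 0)) * hn - (n 0 * t 1 - n 1 * t 0) * hx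
      + (n 0 * x 1 - n 1 * x 0) * ht

theorem HasDerivAt.cross3 {u v : ℝ → EuclideanSpace ℝ (Fin 3)}
    {u' v' : EuclideanSpace ℝ (Fin 3)} {s : ℝ} (hu : HasDerivAt u u' s)
    (hv : HasDerivAt v v' s) :
    HasDerivAt (fun r => cross3 (u r) (v r)) (cross3 u' (v s) + cross3 (u s) v') s := by
  have coord : ∀ {w : ℝ → EuclideanSpace ℝ (Fin 3)} {w' : EuclideanSpace ℝ (Fin 3)},
      HasDerivAt w w' s →
      ∀ i, HasDerivAt (fun r => w r i) (w' i) s := fun hw i =>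
    ((EuclideanSpace.proj i : EuclideanSpace ℝ (Fin 3) →L[ℝ] ℝ).hasFDerivAt.comp_hasDerivAt s hw)
  have key : HasDerivAt (fun r i => _root_.cross3 (u r) (v r) i)
      (fun i => (_root_.cross3 u' (v s) + _root_.cross3 (u s) v') i) s := by
    rw [hasDerivAt_pi]
    intro i
    fin_cases i <;>
      simp only [Fin.zero_eta, Fin.mk_one, Fin.reduceFinMk, PiLp.add_apply, cross3_zero,
        cross3_one, cross3_two]
    · exact (((coord hu 1).mul (coord hv 2)).sub ((coord hu 2).mul (coord hv 1))).congr_deriv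
        (by ring)
    · exact (((coord hu 2).mul (coord hv 0)).sub ((coord hu 0).mul (coord hv 2))).congr_deriv
        (by ring)
    · exact (((coord hu 0).mul (coord hv 1)).sub ((coord hu 1).mul (coord hv 0))).congr_deriv
        (by ring)
  exact (EuclideanSpace.equiv (Fin 3) ℝ).symm.hasFDerivAt.comp_hasDerivAt s key

theorem inner_deriv_eq_zero_of_norm_eq_one {u : ℝ → EuclideanSpace ℝ (Fin 3)}
    {u' : EuclideanSpace ℝ (Fin 3)} {s : ℝ}
    (hu : HasDerivAt u u' s) (h : ∀ r, ‖u r‖ = 1) : ⟪u s, u'⟫ = 0 := by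
  have h1 := hu.inner ℝ hu
  have h2 : (fun r => ⟪u r, u r⟫) = fun _ => (1 : ℝ) := by
    funext r
    rw [real_inner_self_eq_norm_sq, h r, one_pow]
  rw [h2] at h1
  have h3 := h1.unique (hasDerivAt_const s (1 : ℝ))
  rw [real_inner_comm (u s) u'] at h3
  linarith

theorem stmt_8
    (α : ℝ → EuclideanSpace ℝ (Fin 3))
    (hα : ContDiff ℝ (⊤ : ℕ∞) α)
    (hunit : ∀ s, ‖deriv α s‖ = 1)
    (T : ℝ → EuclideanSpace ℝ (Fin 3)) (hT : ∀ s, T s = deriv α s)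
    (κ : ℝ → ℝ) (hκ : ∀ s, κ s = ‖deriv (deriv α) s‖) (hκpos : ∀ s, 0 < κ s)
    (N : ℝ → EuclideanSpace ℝ (Fin 3)) (hN : ∀ s, N s = (κ s)⁻¹ • deriv (deriv α) s)
    (B : ℝ → EuclideanSpace ℝ (Fin 3)) (hB : ∀ s, B s = cross3 (T s) (N s))
    (τ : ℝ → ℝ) (hτ : ∀ s, τ s = ⟪deriv N s, B s⟫)
    (f : ℝ → ℝ) (hf : ∀ s, f s = Real.sqrt (κ s ^ 2 + τ s ^ 2))
    (g : ℝ → ℝ) (hg : ∀ s, g s = κ s ^ 2 / (κ s ^ 2 + τ s ^ 2) * deriv (fun u => τ u / κ u) s)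
    (C : ℝ → EuclideanSpace ℝ (Fin 3))
    (hC : ∀ s, C s = (Real.sqrt (κ s ^ 2 + τ s ^ 2))⁻¹ • ((-κ s) • T s + τ s • B s))
    (W : ℝ → EuclideanSpace ℝ (Fin 3))
    (hW : ∀ s, W s = (Real.sqrt (κ s ^ 2 + τ s ^ 2))⁻¹ • (τ s • T s + κ s • B s))
    (θ : ℝ → ℝ) (hθdiff : Differentiable ℝ θ)
    (hθderiv : ∀ s, deriv θ s = g s)
    (hθκ : ∀ s, κ s = f s * Real.cos (θ s))
    (hθτ : ∀ s, τ s = f s * Real.sin (θ s))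
    (φs φv : ℝ → ℝ → EuclideanSpace ℝ (Fin 3))
    (hφs : ∀ s v, φs s v = deriv (fun u => α u + v • C u) s)
    (hφv : ∀ s v, φv s v = deriv (fun w => α s + w • C s) v) :
    ∀ (s v : ℝ),
      φs s v = (-(v * f s)) • N s + (-Real.cos (θ s)) • C s + (Real.sin (θ s) + v * g s) • W s ∧
      φv s v = C s ∧
      ‖φs s v‖ ^ 2 = v ^ 2 * f s ^ 2 + Real.cos (θ s) ^ 2 + (Real.sin (θ s) + v * g s) ^ 2 ∧
      ⟪φs s v, φv s v⟫ = -Real.cos (θ s) ∧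
      ‖φv s v‖ ^ 2 = 1 ∧
      ‖φs s v‖ ^ 2 * ‖φv s v‖ ^ 2 - ⟪φs s v, φv s v⟫ ^ 2 =
        v ^ 2 * f s ^ 2 + (Real.sin (θ s) + v * g s) ^ 2 := by
  have hα1 : ContDiff ℝ (⊤ : ℕ∞) (deriv α) := hα.iterate_deriv 1
  have hα2 : ContDiff ℝ (⊤ : ℕ∞) (deriv (deriv α)) := hα1.iterate_deriv 1
  have hα0 (s : ℝ) : HasDerivAt α (T s) s := by
    rw [hT]
    exact (hα.differentiable (by simp) s).hasDerivAt
  have hTunit (s : ℝ) : ‖T s‖ = 1 := by rw [hT, hunit]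
  have hT' (s : ℝ) : HasDerivAt T (κ s • N s) s := by
    rw [hN, smul_inv_smul₀ (hκpos s).ne', funext hT]
    exact (hα1.differentiable (by simp) s).hasDerivAt
  have hNunit (s : ℝ) : ‖N s‖ = 1 := by
    rw [hN, norm_smul, ← hκ, norm_inv, Real.norm_of_nonneg (hκpos s).le,
      inv_mul_cancel₀ (hκpos s).ne']
  have hN' (s : ℝ) : HasDerivAt N (deriv N s) s := by
    have hd := hα2.differentiable (by simp) s
    have hne : deriv (deriv α) s ≠ 0 := by
      rw [← norm_pos_iff, ← hκ]
      exact hκpos s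
    have hκd : DifferentiableAt ℝ κ s := by
      rw [funext hκ]
      exact hd.norm ℝ hne
    apply DifferentiableAt.hasDerivAt
    rw [funext hN]
    exact (hκd.inv (hκpos s).ne').smul hd
  have hNN (s : ℝ) : ⟪N s, N s⟫ = 1 := by rw [real_inner_self_eq_norm_sq, hNunit, one_pow]
  have hTT (s : ℝ) : ⟪T s, T s⟫ = 1 := by rw [real_inner_self_eq_norm_sq, hTunit, one_pow]
  have hTN (s : ℝ) : ⟪T s, N s⟫ = 0 := by
    have h := inner_deriv_eq_zero_of_norm_eq_one (hT' s) hTunit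
    rw [real_inner_smul_right] at h
    exact (mul_eq_zero.mp h).resolve_left (hκpos s).ne'
  have hB' (s : ℝ) : HasDerivAt B ((-τ s) • N s) s := by
    have h := (hT' s).cross3 (hN' s)
    rw [cross3_smul_self, zero_add, cross3_eq_smul_of_orthogonal (hNN s) (hTN s)
      (inner_deriv_eq_zero_of_norm_eq_one (hN' s) hNunit), ← hB, ← hτ] at h
    rwa [funext hB]
  have hTB (s : ℝ) : ⟪T s, B s⟫ = 0 := by rw [hB, inner_cross3_left]
  have hNB (s : ℝ) : ⟪N s, B s⟫ = 0 := by rw [hB, inner_cross3_right]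
  have hBB (s : ℝ) : ⟪B s, B s⟫ = 1 := by
    rw [hB, inner_cross3_self, hTT, hNN, hTN]
    norm_num
  have hfpos (s : ℝ) : 0 < f s := by
    rw [hf]
    have := hκpos s
    positivity
  have hCθ (s : ℝ) : C s = (-Real.cos (θ s)) • T s + Real.sin (θ s) • B s := by
    have := (hfpos s).ne'
    rw [hC, ← hf, hθκ, hθτ]
    match_scalars <;> field_simp
  have hWθ (s : ℝ) : W s = Real.sin (θ s) • T s + Real.cos (θ s) • B s := by
    have := (hfpos s).ne'
    rw [hW, ← hf, hθκ, hθτ]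
    match_scalars <;> field_simp
  have hC' (s : ℝ) : HasDerivAt C ((-f s) • N s + g s • W s) s := by
    have hθ : HasDerivAt θ (g s) s := hθderiv s ▸ (hθdiff s).hasDerivAt
    have h := (hθ.cos.neg.smul (hT' s)).add (hθ.sin.smul (hB' s))
    rw [funext hCθ]
    refine h.congr_deriv ?_
    rw [hWθ, hθκ, hθτ, Pi.neg_apply]
    match_scalars
    · linear_combination (-f s) * Real.sin_sq_add_cos_sq (θ s)
    · ring
    · ring
  intro s v
  have hsc := Real.sin_sq_add_cos_sq (θ s)
  have hφs' : φs s v =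
      (-(v * f s)) • N s + (-Real.cos (θ s)) • C s + (Real.sin (θ s) + v * g s) • W s := by
    have h := ((hα0 s).add ((hC' s).const_smul v)).deriv
    rw [hφs]
    refine h.trans ?_
    rw [hCθ, hWθ]
    match_scalars
    · linear_combination -hsc
    · ring
    · ring
  have hφv' : φv s v = C s := by
    rw [hφv, (((hasDerivAt_id' v).smul_const (C s)).const_add (α s)).deriv, one_smul]
  have hCC : ⟪C s, C s⟫ = 1 := by
    simp only [hCθ, inner_add_left, inner_add_right, real_inner_smul_left, real_inner_smul_right,
      real_inner_comm (T s) (B s), hTT, hTB, hBB]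
    linear_combination hsc
  have hWW : ⟪W s, W s⟫ = 1 := by
    simp only [hWθ, inner_add_left, inner_add_right, real_inner_smul_left, real_inner_smul_right,
      real_inner_comm (T s) (B s), hTT, hTB, hBB]
    linear_combination hsc
  have hCW : ⟪C s, W s⟫ = 0 := by
    simp only [hCθ, hWθ, inner_add_left, inner_add_right, real_inner_smul_left,
      real_inner_smul_right, real_inner_comm (T s) (B s), hTT, hTB, hBB]
    ring
  have hNC : ⟪N s, C s⟫ = 0 := by
    simp only [hCθ, inner_add_right, real_inner_smul_right, real_inner_comm (T s) (N s), hTN, hNB]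
    ring
  have hNW : ⟪N s, W s⟫ = 0 := by
    simp only [hWθ, inner_add_right, real_inner_smul_right, real_inner_comm (T s) (N s), hTN, hNB]
    ring
  have hE : ‖φs s v‖ ^ 2 =
      v ^ 2 * f s ^ 2 + Real.cos (θ s) ^ 2 + (Real.sin (θ s) + v * g s) ^ 2 := by
    rw [← real_inner_self_eq_norm_sq, hφs']
    simp only [inner_add_left, inner_add_right, real_inner_smul_left, real_inner_smul_right,
      real_inner_comm (N s) (C s), real_inner_comm (N s) (W s), real_inner_comm (C s) (W s),
      hNN, hCC, hWW, hNC, hNW, hCW]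
    ring
  have hF : ⟪φs s v, φv s v⟫ = -Real.cos (θ s) := by
    rw [hφs', hφv']
    simp only [inner_add_left, real_inner_smul_left, real_inner_comm (C s) (W s), hCC, hNC, hCW]
    ring
  have hG : ‖φv s v‖ ^ 2 = 1 := by rw [hφv', ← real_inner_self_eq_norm_sq, hCC]
  refine ⟨hφs', hφv', hE, hF, hG, ?_⟩
  rw [hE, hF, hG]
  ring
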